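/- arXiv:2407.05095 — 2 statements merged into one kernel-verified Lean document; each statement's English description precedes it below -/
import Mathlib

section
/- Let K ∈ ps(C), let ϖ ⊂ Ω_{C°} be nonempty and compact, and define K^{(ϖ)} = C ∩ ⋂_{u∈ϖ} H^-(u, h_K(u)), which belongs to K(C,ϖ). Then for every compact set ω ⊂ int ϖ (interior relative to Ω_{C°}), one has ν_{K^{(ϖ)}}^{-1}(ω) = ν_K^{-1}(ω). -/
open MeasureTheory Set Filter
open scoped RealInnerProductSpace ENNReal Topology Pointwise NNReal

noncomputable section

abbrev En (n : ℕ) := EuclideanSpace ℝ (Fin n)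

/-- `C` is a pointed closed convex cone with nonempty interior. -/
def IsGoodCone (n : ℕ) (C : Set (En n)) : Prop :=
  IsClosed C ∧ Convex ℝ C ∧ (∀ x ∈ C, ∀ r : ℝ, 0 ≤ r → r • x ∈ C) ∧
    C ∩ (-C) = {0} ∧ (interior C).Nonempty

/-- The dual cone `C° = {x : ⟨x,y⟩ ≤ 0 ∀ y ∈ C}`. -/
def dualCone (n : ℕ) (C : Set (En n)) : Set (En n) := {x | ∀ y ∈ C, ⟪x, y⟫ ≤ 0}

/-- `Ω_C = S^{n-1} ∩ int C`. -/
def omegaC (n : ℕ) (C : Set (En n)) : Set (En n) := Metric.sphere 0 1 ∩ interior C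

/-- `Ω_{C°} = S^{n-1} ∩ int C°`. -/
def omegaDual (n : ℕ) (C : Set (En n)) : Set (En n) :=
  Metric.sphere 0 1 ∩ interior (dualCone n C)

/-- A pseudo-cone: nonempty closed convex set not containing `0` with `λK ⊆ K` for `λ ≥ 1`. -/
def IsPseudoCone (n : ℕ) (K : Set (En n)) : Prop :=
  K.Nonempty ∧ IsClosed K ∧ Convex ℝ K ∧ (0 : En n) ∉ K ∧ ∀ l : ℝ, 1 ≤ l → l • K ⊆ K

/-- The recession cone of `K`. -/
def recCone (n : ℕ) (K : Set (En n)) : Set (En n) :=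
  {z | ∀ x ∈ K, ∀ t : ℝ, 0 ≤ t → x + t • z ∈ K}

/-- A `C`-pseudo-cone: a pseudo-cone with recession cone `C`. -/
def IsCPseudoCone (n : ℕ) (C K : Set (En n)) : Prop := IsPseudoCone n K ∧ recCone n K = C

/-- The set of outer unit normal vectors of `K` at `x`. -/
def normalsAt (n : ℕ) (K : Set (En n)) (x : En n) : Set (En n) :=
  {u | ‖u‖ = 1 ∧ ∀ y ∈ K, ⟪y, u⟫ ≤ ⟪x, u⟫}

/-- `ν_K^{-1}(ω)`: the boundary points of `K` whose outer unit normal is unique and lies in `ω`. -/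
def nuInv (n : ℕ) (K ω : Set (En n)) : Set (En n) :=
  {x | x ∈ frontier K ∧ ∃ u ∈ ω, normalsAt n K x = {u}}

open Classical in
/-- The outer unit normal map `ν_K` (junk value `0` where the normal is not unique). -/
def nuMap (n : ℕ) (K : Set (En n)) (x : En n) : En n :=
  if h : ∃ u, normalsAt n K x = {u} then h.choose else 0

/-- `Δ(ω)`: the spherical (angular) distance of `ω` from the boundary of `Ω_{C°}`
(the relative boundary of `Ω_{C°}` in the unit sphere is `closure Ω_{C°} \ Ω_{C°}`,
since `Ω_{C°}` is relatively open in the sphere). -/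
def sphereAngleDist (n : ℕ) (C ω : Set (En n)) : ℝ :=
  sInf {d | ∃ u ∈ ω, ∃ v ∈ closure (omegaDual n C) \ omegaDual n C,
    d = InnerProductGeometry.angle u v}

/-- `b(K)`: the distance of `K` from the origin. -/
def distOrigin (n : ℕ) (K : Set (En n)) : ℝ := Metric.infDist 0 K

/-- `C^-(t) = C ∩ H^-(𝔳, t)`. -/
def Cminus (n : ℕ) (C : Set (En n)) (v : En n) (t : ℝ) : Set (En n) :=
  C ∩ {x | ⟪x, v⟫ ≤ t}

/-- The support function `h_K(u) = sup{⟨y,u⟩ : y ∈ K}`. -/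
def suppFn (n : ℕ) (K : Set (En n)) (u : En n) : ℝ := sSup ((fun y => ⟪y, u⟫) '' K)

/-- `Θ : C∖{0} → (0,∞)` continuous and homogeneous of degree `-q`. -/
def IsThetaWeight (n : ℕ) (C : Set (En n)) (q : ℝ) (Θ : En n → ℝ) : Prop :=
  ContinuousOn Θ (C \ {0}) ∧ (∀ y ∈ C \ {0}, 0 < Θ y) ∧
    ∀ y ∈ C \ {0}, ∀ r : ℝ, 0 < r → Θ (r • y) = r ^ (-q) * Θ y

/-- The `Θ`-weighted `n`-dimensional Hausdorff (Lebesgue) measure `H_Θ^n`. -/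
def HTheta (n : ℕ) (Θ : En n → ℝ) : Measure (En n) :=
  volume.withDensity fun y => ENNReal.ofReal (Θ y)

/-- The `Θ`-weighted cone-volume measure `V_K^Θ(ω) = H_Θ^n(⋃_{x ∈ ν_K^{-1}(ω)} [0,x])`. -/
def coneVol (n : ℕ) (Θ : En n → ℝ) (K ω : Set (En n)) : ℝ≥0∞ :=
  HTheta n Θ (⋃ x ∈ nuInv n K ω, segment ℝ (0 : En n) x)

/-- The (unweighted) cone-volume measure `V_K(ω) = H^n(⋃_{x ∈ ν_K^{-1}(ω)} [0,x])`. -/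
def coneVolU (n : ℕ) (K ω : Set (En n)) : ℝ≥0∞ :=
  volume (⋃ x ∈ nuInv n K ω, segment ℝ (0 : En n) x)

/-- The `Θ`-weighted surface area measure `S_{n-1}^Θ(K,ω) = ∫_{ν_K^{-1}(ω)} Θ dH^{n-1}`. -/
def surfTheta (n : ℕ) (Θ : En n → ℝ) (K ω : Set (En n)) : ℝ≥0∞ :=
  ∫⁻ x in nuInv n K ω, ENNReal.ofReal (Θ x) ∂(μH[(n : ℝ) - 1])

/-- `K ∈ K(C,ϖ)`: `K` is a `C`-pseudo-cone that is `C`-determined by `ϖ`. -/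
def CDetermined (n : ℕ) (C ϖ K : Set (En n)) : Prop :=
  IsCPseudoCone n C K ∧ K = C ∩ ⋂ u ∈ ϖ, {x | ⟪x, u⟫ ≤ suppFn n K u}

/-- The Wulff shape `[g] = C ∩ ⋂_{u ∈ ϖ} {y : ⟨y,u⟩ ≤ -g(u)}`. -/
def wulff (n : ℕ) (C ϖ : Set (En n)) (g : En n → ℝ) : Set (En n) :=
  C ∩ ⋂ u ∈ ϖ, {y | ⟪y, u⟫ ≤ -g u}

/-- The `Θ`-weighted covolume `V_Θ(K) = ∫_{C∖K} Θ dH^n`. -/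
def covol (n : ℕ) (Θ : En n → ℝ) (C K : Set (En n)) : ℝ≥0∞ := HTheta n Θ (C \ K)

/-- The radial function `ρ_K(v) = min{λ : λv ∈ K}`. -/
def rho (n : ℕ) (K : Set (En n)) (v : En n) : ℝ := sInf {t : ℝ | t • v ∈ K}

/-- The radial map `r_K(v) = ρ_K(v) v`. -/
def radMap (n : ℕ) (K : Set (En n)) (v : En n) : En n := rho n K v • v

/-- `α_K^{-1}(ω)`: directions `v ∈ Ω_C` with `r_K(v) ∈ ∂'K` (boundary point in `int C` with
unique outer normal) whose unique outer normal lies in `ω`. -/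
def alphaInv (n : ℕ) (C K ω : Set (En n)) : Set (En n) :=
  {v ∈ omegaC n C | radMap n K v ∈ frontier K ∧ radMap n K v ∈ interior C ∧
    ∃ u ∈ ω, normalsAt n K (radMap n K v) = {u}}

/-- `μ` is the Borel measure on `Ω_{C°}` representing the `Θ`-weighted cone-volume
measure of `K` (extended by `0` outside `Ω_{C°}`). -/
def RepsConeVol (n : ℕ) (C : Set (En n)) (Θ : En n → ℝ) (K : Set (En n))
    (μ : Measure (En n)) : Prop :=
  μ (omegaDual n C)ᶜ = 0 ∧
    ∀ ω, MeasurableSet ω → ω ⊆ omegaDual n C → μ ω = coneVol n Θ K ω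

/-- `μ` is the Borel measure on `Ω_{C°}` representing the `Θ`-weighted surface area
measure of `K` (extended by `0` outside `Ω_{C°}`). -/
def RepsSurf (n : ℕ) (C : Set (En n)) (Θ : En n → ℝ) (K : Set (En n))
    (μ : Measure (En n)) : Prop :=
  μ (omegaDual n C)ᶜ = 0 ∧
    ∀ ω, MeasurableSet ω → ω ⊆ omegaDual n C → μ ω = surfTheta n Θ K ω

/-!
Put `L = K^{(ϖ)}`. Since `h_K` is positively homogeneous, `L` lies in every half-space that
contains `K` and whose normal has its direction in `ϖ`. If `u` is interior to `ϖ`, all small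
tilts `u + t • v` have such a direction. Let `u` be a normal of `K` at a point `x` of `L`. If
some `v` separated `x` from `K`, then `u + t • v` would do so as well, which is impossible;
hence `x ∈ K`. If `w` is a second normal of `K` at `x`, then the directions of `u + t • w` are
normals of `K` at `x` lying in `ϖ`, hence normals of `L` at `x`; so uniqueness of `u` for `L`
gives uniqueness for `K`, the case `w = -u` being excluded because `K` contains the dilates of
`x` while `⟪x, u⟫ < 0`.
-/

section Convexity

variable {V : Type*} [AddCommGroup V] [Module ℝ V] [TopologicalSpace V]

/-- A pseudo-cone in a real topological vector space; the dimension-free form of `IsPseudoCone`. -/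
structure IsPseudoConeSet (K : Set V) : Prop where
  nonempty : K.Nonempty
  isClosed : IsClosed K
  convex : Convex ℝ K
  zero_notMem : (0 : V) ∉ K
  smul_mem : ∀ ⦃x⦄, x ∈ K → ∀ ⦃r : ℝ⦄, 1 ≤ r → r • x ∈ K

variable [IsTopologicalAddGroup V] [ContinuousSMul ℝ V]

theorem subset_asymptoticCone_of_smul_mem {K : Set V}
    (hK : ∀ ⦃x⦄, x ∈ K → ∀ ⦃r : ℝ⦄, 1 ≤ r → r • x ∈ K) : K ⊆ asymptoticCone ℝ K := fun x hx =>
  (tendsto_id.atTop_smul_const_tendsto_asymptoticNhds x).frequently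
    ((eventually_ge_atTop 1).mono fun _ hr => hK hx hr).frequently

theorem mem_asymptoticCone_of_forall_add_smul_mem {K : Set V} {x z : V}
    (h : ∀ t : ℝ, 0 ≤ t → x + t • z ∈ K) : z ∈ asymptoticCone ℝ K :=
  ((tendsto_id.atTop_smul_const_tendsto_asymptoticNhds z).const_vadd_asymptoticNhds x).frequently
    ((eventually_ge_atTop 0).mono fun t ht => h t ht).frequently

theorem mem_asymptoticCone_iff_forall_add_smul_mem {K : Set V} (hne : K.Nonempty)
    (hcl : IsClosed K) (hconv : Convex ℝ K) {z : V} :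
    z ∈ asymptoticCone ℝ K ↔ ∀ x ∈ K, ∀ t : ℝ, 0 ≤ t → x + t • z ∈ K := by
  refine ⟨fun hz x hx t ht => ?_, fun h => ?_⟩
  · rw [add_comm]
    exact hconv.smul_vadd_mem_of_isClosed_of_mem_asymptoticCone hcl ht hz hx
  · obtain ⟨x, hx⟩ := hne
    exact mem_asymptoticCone_of_forall_add_smul_mem (h x hx)

end Convexity

section NormedSpace

variable {V : Type*} [NormedAddCommGroup V] [NormedSpace ℝ V] {u v : V} {U : Set V}

theorem tendsto_add_smul_nhdsGT_zero (u v : V) :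
    Tendsto (fun t : ℝ => u + t • v) (𝓝[>] 0) (𝓝 u) := by
  have hcont : Continuous fun t : ℝ => u + t • v := by fun_prop
  simpa using (hcont.tendsto 0).mono_left (nhdsWithin_le_nhds (s := Ioi 0))

theorem tendsto_normalize_nhdsWithin_sphere (hu : ‖u‖ = 1) :
    Tendsto NormedSpace.normalize (𝓝 u) (𝓝[Metric.sphere 0 1] u) := by
  have hu0 : u ≠ 0 := norm_ne_zero_iff.1 (by simp [hu])
  refine tendsto_nhdsWithin_iff.2 ⟨?_, ?_⟩
  · have hcont : ContinuousAt NormedSpace.normalize u :=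
      (continuousAt_id.norm.inv₀ (norm_ne_zero_iff.2 hu0)).smul continuousAt_id
    simpa only [NormedSpace.normalize_eq_self_of_norm_eq_one hu] using hcont.tendsto
  · filter_upwards [isOpen_ne.mem_nhds hu0] with w hw
    rw [mem_sphere_zero_iff_norm, NormedSpace.norm_normalize_eq_one_iff]
    exact hw

theorem exists_pos_normalize_add_smul_mem (hu : ‖u‖ = 1) (hU : U ∈ 𝓝[Metric.sphere 0 1] u)
    (v : V) : ∃ t > (0 : ℝ), NormedSpace.normalize (u + t • v) ∈ U := by
  have hmem : ∀ᶠ t in 𝓝[>] (0 : ℝ), NormedSpace.normalize (u + t • v) ∈ U :=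
    ((tendsto_normalize_nhdsWithin_sphere hu).comp
      (tendsto_add_smul_nhdsGT_zero u v)).eventually hU
  obtain ⟨t, htU, ht⟩ := (hmem.and self_mem_nhdsWithin).exists
  exact ⟨t, ht, htU⟩

theorem eq_or_eq_neg_of_normalize_add_smul_eq {t : ℝ} (ht : 0 < t) (hu : ‖u‖ = 1) (hv : ‖v‖ = 1)
    (h : NormedSpace.normalize (u + t • v) = u) : v = u ∨ v = -u := by
  obtain ⟨r, hr⟩ : ∃ r : ℝ, t • v = r • u := by
    refine ⟨‖u + t • v‖ - 1, ?_⟩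
    have hnorm := NormedSpace.norm_smul_normalize (u + t • v)
    rw [h] at hnorm
    rw [sub_smul, one_smul, hnorm, add_sub_cancel_left]
  have hvr : v = NormedSpace.normalize (r • u) := by
    rw [← hr, NormedSpace.normalize_smul_of_pos ht, NormedSpace.normalize_eq_self_of_norm_eq_one hv]
  have huu : NormedSpace.normalize u = u := NormedSpace.normalize_eq_self_of_norm_eq_one hu
  rcases lt_trichotomy r 0 with hneg | rfl | hpos
  · exact Or.inr (by rw [hvr, NormedSpace.normalize_smul_of_neg hneg, huu])
  · rw [zero_smul, NormedSpace.normalize_zero_eq_zero] at hvr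
    simp [hvr] at hv
  · exact Or.inl (by rw [hvr, NormedSpace.normalize_smul_of_pos hpos, huu])

end NormedSpace

section InnerProductSpace

variable {E : Type*} [NormedAddCommGroup E] [InnerProductSpace ℝ E]
  {C D K L U ϖ ω : Set E} {g : E → ℝ} {u w x y : E}

/-- The polar cone `C°`, with the sign convention opposite to that of `ProperCone.innerDual`. -/
def polarCone (C : Set E) : Set E := {u | ∀ y ∈ C, ⟪u, y⟫ ≤ 0}

/-- The support function `h_K` of a subset of an inner product space. Its value is meaningful only
where `⟪·, u⟫` is bounded above on `K` and `K` is nonempty. -/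
def supportFun (K : Set E) (u : E) : ℝ := sSup ((fun y => ⟪y, u⟫) '' K)

/-- The outer unit normal vectors of `K` at `x`. -/
def outerUnitNormals (K : Set E) (x : E) : Set E := {u | ‖u‖ = 1 ∧ ∀ y ∈ K, ⟪y, u⟫ ≤ ⟪x, u⟫}

/-- The set `ν_K⁻¹(ω)` of boundary points of `K` with a unique outer unit normal, lying in `ω`. -/
def gaussPreimage (K ω : Set E) : Set E :=
  {x | x ∈ frontier K ∧ ∃ u ∈ ω, outerUnitNormals K x = {u}}

/-- The part of `C` cut out by the half-spaces `H⁻(u, g u)` with `u ∈ ϖ`. The Wulff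
shape `[f]` is the case `g = -f`. -/
def wulffShape (C ϖ : Set E) (g : E → ℝ) : Set E := C ∩ ⋂ u ∈ ϖ, {x | ⟪x, u⟫ ≤ g u}

/-- The set `K^{(ϖ)}`, where the ambient cone `C` is the recession cone of `K`. For the nonempty
closed convex sets considered here, the latter is Mathlib's `asymptoticCone`. -/
abbrev determinedHull (K ϖ : Set E) : Set E := wulffShape (asymptoticCone ℝ K) ϖ (supportFun K)

theorem polarCone_anti (h : C ⊆ D) : polarCone D ⊆ polarCone C := fun _ hu y hy => hu y (h hy)

theorem inner_nonpos_of_mem_polarCone (hu : u ∈ polarCone C) (hy : y ∈ C) : ⟪y, u⟫ ≤ 0 := by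
  rw [real_inner_comm]
  exact hu y hy

theorem exists_inner_le_neg_mul_norm (hu : u ∈ interior (polarCone C)) :
    ∃ c > (0 : ℝ), ∀ y ∈ C, ⟪y, u⟫ ≤ -(c * ‖y‖) := by
  obtain ⟨c, hc, hball⟩ :=
    Metric.nhds_basis_closedBall.mem_iff.1 (mem_interior_iff_mem_nhds.1 hu)
  refine ⟨c, hc, fun y hy => ?_⟩
  have hmem : u + c • NormedSpace.normalize y ∈ Metric.closedBall u c := by
    rw [mem_closedBall_iff_norm, add_sub_cancel_left, norm_smul, Real.norm_of_nonneg hc.le]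
    rcases eq_or_ne y 0 with rfl | hy0
    · simpa using hc.le
    · rw [NormedSpace.norm_normalize hy0, mul_one]
  have hpolar : ⟪y, u + c • NormedSpace.normalize y⟫ ≤ 0 :=
    inner_nonpos_of_mem_polarCone (hball hmem) hy
  have hself : ⟪y, NormedSpace.normalize y⟫ = ‖y‖ := by
    rw [NormedSpace.normalize, real_inner_smul_right, real_inner_self_eq_norm_mul_norm,
      ← mul_assoc, inv_mul_mul_self]
  rw [inner_add_right, real_inner_smul_right, hself] at hpolar
  linarith

theorem inner_neg_of_mem_interior_polarCone (hu : u ∈ interior (polarCone C)) (hy : y ∈ C)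
    (hy0 : y ≠ 0) : ⟪y, u⟫ < 0 := by
  obtain ⟨c, hc, hle⟩ := exists_inner_le_neg_mul_norm hu
  have : 0 < c * ‖y‖ := mul_pos hc (norm_pos_iff.2 hy0)
  linarith [hle y hy]

theorem inner_le_supportFun (hu : u ∈ polarCone K) (hy : y ∈ K) : ⟪y, u⟫ ≤ supportFun K u :=
  le_csSup ⟨0, forall_mem_image.2 fun _ hz => inner_nonpos_of_mem_polarCone hu hz⟩
    (mem_image_of_mem _ hy)

theorem supportFun_le (hne : K.Nonempty) {b : ℝ} (h : ∀ y ∈ K, ⟪y, u⟫ ≤ b) : supportFun K u ≤ b :=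
  csSup_le (hne.image _) (forall_mem_image.2 h)

theorem supportFun_smul {r : ℝ} (hr : 0 ≤ r) (K : Set E) (u : E) :
    supportFun K (r • u) = r * supportFun K u := by
  rw [supportFun, supportFun, ← smul_eq_mul, ← Real.sSup_smul_of_nonneg hr, ← image_smul,
    image_image]
  simp only [real_inner_smul_right, smul_eq_mul]

theorem supportFun_neg (hne : K.Nonempty) (hcl : IsClosed K) (h0 : (0 : E) ∉ K)
    (hu : u ∈ interior (polarCone K)) : supportFun K u < 0 := by
  obtain ⟨c, hc, hle⟩ := exists_inner_le_neg_mul_norm hu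
  have hdist : 0 < Metric.infDist 0 K := (hcl.notMem_iff_infDist_pos hne).1 h0
  have hbound : supportFun K u ≤ -(c * Metric.infDist 0 K) := by
    refine supportFun_le hne fun y hy => (hle y hy).trans ?_
    have hy : Metric.infDist 0 K ≤ ‖y‖ := dist_zero_left y ▸ Metric.infDist_le_dist_of_mem hy
    gcongr
  linarith [mul_pos hc hdist]

theorem outerUnitNormals_anti (h : K ⊆ L) (x : E) : outerUnitNormals L x ⊆ outerUnitNormals K x :=
  fun _ hu => ⟨hu.1, fun y hy => hu.2 y (h hy)⟩

theorem mem_frontier_of_mem_outerUnitNormals (hx : x ∈ K) (hu : u ∈ outerUnitNormals K x) :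
    x ∈ frontier K := by
  refine ⟨subset_closure hx, fun hint => ?_⟩
  obtain ⟨t, htK, ht⟩ := (((tendsto_add_smul_nhdsGT_zero x u).eventually
    (mem_interior_iff_mem_nhds.1 hint)).and self_mem_nhdsWithin).exists
  have hle := hu.2 _ htK
  rw [inner_add_left, real_inner_smul_left, real_inner_self_eq_norm_sq, hu.1] at hle
  exact hle.not_gt (by simpa using ht)

theorem mem_gaussPreimage_iff_of_isClosed (hK : IsClosed K) :
    x ∈ gaussPreimage K ω ↔ x ∈ K ∧ ∃ u ∈ ω, outerUnitNormals K x = {u} := by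
  refine ⟨fun h => ⟨hK.frontier_subset h.1, h.2⟩, fun ⟨hx, u, hu, hN⟩ => ⟨?_, u, hu, hN⟩⟩
  exact mem_frontier_of_mem_outerUnitNormals hx (hN ▸ mem_singleton u)

theorem neg_notMem_outerUnitNormals (hsmul : ∀ ⦃x⦄, x ∈ K → ∀ ⦃r : ℝ⦄, 1 ≤ r → r • x ∈ K)
    (hx : x ∈ K) (hxu : ⟪x, u⟫ < 0) : -u ∉ outerUnitNormals K x := fun h => by
  have hle := h.2 _ (hsmul hx one_le_two)
  rw [real_inner_smul_left, inner_neg_right] at hle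
  linarith

theorem normalize_add_smul_mem_outerUnitNormals (hu : u ∈ outerUnitNormals K x)
    (hw : w ∈ outerUnitNormals K x) {t : ℝ} (ht : 0 ≤ t)
    (h : ‖NormedSpace.normalize (u + t • w)‖ = 1) :
    NormedSpace.normalize (u + t • w) ∈ outerUnitNormals K x := by
  refine ⟨h, fun y hy => ?_⟩
  have hyu := hu.2 y hy
  have hyw := hw.2 y hy
  simp only [NormedSpace.normalize, real_inner_smul_right, inner_add_right]
  gcongr

theorem outerUnitNormals_eq_singleton_of_isolated (hu : u ∈ outerUnitNormals K x)
    (hneg : -u ∉ outerUnitNormals K x) (hU : U ∈ 𝓝[Metric.sphere 0 1] u)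
    (hKU : outerUnitNormals K x ∩ U ⊆ {u}) : outerUnitNormals K x = {u} := by
  refine Subset.antisymm (fun w hw => ?_) (singleton_subset_iff.2 hu)
  obtain ⟨t, ht, htU, hnorm⟩ :=
    exists_pos_normalize_add_smul_mem hu.1 (inter_mem hU self_mem_nhdsWithin) w
  have hmem := normalize_add_smul_mem_outerUnitNormals hu hw ht.le
    (mem_sphere_zero_iff_norm.1 hnorm)
  have heq : NormedSpace.normalize (u + t • w) = u := hKU ⟨hmem, htU⟩
  rcases eq_or_eq_neg_of_normalize_add_smul_eq ht hu.1 hw.1 heq with h | h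
  · exact h
  · exact absurd (h ▸ hw) hneg

theorem mem_wulffShape : x ∈ wulffShape C ϖ g ↔ x ∈ C ∧ ∀ u ∈ ϖ, ⟪x, u⟫ ≤ g u := by
  simp only [wulffShape, mem_inter_iff, mem_iInter, mem_ofPred_eq]

theorem isClosed_wulffShape (hC : IsClosed C) : IsClosed (wulffShape C ϖ g) :=
  hC.inter <| isClosed_biInter fun _ _ => isClosed_le (by fun_prop) continuous_const

theorem convex_wulffShape (hC : Convex ℝ C) : Convex ℝ (wulffShape C ϖ g) :=
  hC.inter <| convex_iInter₂ fun u _ => convex_halfSpace_le ((innerₗ E).flip u).isLinear (g u)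

theorem smul_mem_wulffShape (hC : ∀ ⦃x⦄, x ∈ C → ∀ ⦃r : ℝ⦄, 1 ≤ r → r • x ∈ C)
    (hϖ : ϖ ⊆ polarCone C) (hx : x ∈ wulffShape C ϖ g) {r : ℝ} (hr : 1 ≤ r) :
    r • x ∈ wulffShape C ϖ g := by
  obtain ⟨hxC, hxg⟩ := mem_wulffShape.1 hx
  refine mem_wulffShape.2 ⟨hC hxC hr, fun u hu => ?_⟩
  rw [real_inner_smul_left]
  calc r * ⟪x, u⟫ ≤ 1 * ⟪x, u⟫ :=
        mul_le_mul_of_nonpos_right hr (inner_nonpos_of_mem_polarCone (hϖ hu) hxC)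
    _ ≤ g u := by rw [one_mul]; exact hxg u hu

theorem asymptoticCone_wulffShape (hcl : IsClosed C) (hconv : Convex ℝ C)
    (hϖ : ϖ ⊆ polarCone (asymptoticCone ℝ C)) (hne : (wulffShape C ϖ g).Nonempty) :
    asymptoticCone ℝ (wulffShape C ϖ g) = asymptoticCone ℝ C := by
  refine Subset.antisymm (asymptoticCone_mono inter_subset_left) fun z hz => ?_
  obtain ⟨x, hx⟩ := hne
  obtain ⟨hxC, hxg⟩ := mem_wulffShape.1 hx
  refine mem_asymptoticCone_of_forall_add_smul_mem (x := x) fun t ht => mem_wulffShape.2 ⟨?_, ?_⟩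
  · exact (mem_asymptoticCone_iff_forall_add_smul_mem ⟨x, hxC⟩ hcl hconv).1 hz x hxC t ht
  · intro u hu
    have hzu : ⟪t • z, u⟫ ≤ 0 :=
      inner_nonpos_of_mem_polarCone (hϖ hu) (smul_mem_asymptoticCone ht hz)
    rw [inner_add_left]
    linarith [hxg u hu]

theorem subset_wulffShape_supportFun (hKC : K ⊆ C) (hϖ : ϖ ⊆ polarCone K) :
    K ⊆ wulffShape C ϖ (supportFun K) := fun _ hy =>
  mem_wulffShape.2 ⟨hKC hy, fun _ hu => inner_le_supportFun (hϖ hu) hy⟩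

theorem supportFun_wulffShape (hne : K.Nonempty) (hKC : K ⊆ C) (hϖ : ϖ ⊆ polarCone C)
    (hu : u ∈ ϖ) : supportFun (wulffShape C ϖ (supportFun K)) u = supportFun K u := by
  have hKL := subset_wulffShape_supportFun hKC (hϖ.trans (polarCone_anti hKC))
  refine le_antisymm ?_ ?_
  · exact supportFun_le (hne.mono hKL) fun y hy => (mem_wulffShape.1 hy).2 u hu
  · exact supportFun_le hne fun y hy =>
      inner_le_supportFun (polarCone_anti inter_subset_left (hϖ hu)) (hKL hy)

theorem wulffShape_supportFun_wulffShape (hne : K.Nonempty) (hKC : K ⊆ C)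
    (hϖ : ϖ ⊆ polarCone C) :
    wulffShape C ϖ (supportFun (wulffShape C ϖ (supportFun K))) =
      wulffShape C ϖ (supportFun K) := by
  ext x
  simp only [mem_wulffShape]
  refine and_congr_right fun _ => forall₂_congr fun u hu => ?_
  rw [supportFun_wulffShape hne hKC hϖ hu]

theorem IsPseudoConeSet.subset_asymptoticCone (hK : IsPseudoConeSet K) : K ⊆ asymptoticCone ℝ K :=
  subset_asymptoticCone_of_smul_mem hK.smul_mem

theorem IsPseudoConeSet.subset_determinedHull (hK : IsPseudoConeSet K)
    (hϖ : ϖ ⊆ polarCone (asymptoticCone ℝ K)) : K ⊆ determinedHull K ϖ :=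
  subset_wulffShape_supportFun hK.subset_asymptoticCone
    (hϖ.trans (polarCone_anti hK.subset_asymptoticCone))

theorem IsPseudoConeSet.isPseudoConeSet_determinedHull (hK : IsPseudoConeSet K) (hϖne : ϖ.Nonempty)
    (hϖ : ϖ ⊆ interior (polarCone (asymptoticCone ℝ K))) :
    IsPseudoConeSet (determinedHull K ϖ) where
  nonempty := hK.nonempty.mono (hK.subset_determinedHull (hϖ.trans interior_subset))
  isClosed := isClosed_wulffShape isClosed_asymptoticCone
  convex := convex_wulffShape hK.convex.asymptoticCone
  zero_notMem h0 := by
    obtain ⟨u, hu⟩ := hϖne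
    have hneg : supportFun K u < 0 := supportFun_neg hK.nonempty hK.isClosed hK.zero_notMem <|
      interior_mono (polarCone_anti hK.subset_asymptoticCone) (hϖ hu)
    have hle := (mem_wulffShape.1 h0).2 u hu
    rw [inner_zero_left] at hle
    exact hle.not_gt hneg
  smul_mem _ hx _ hr := smul_mem_wulffShape
    (fun _ hy _ hs => smul_mem_asymptoticCone (zero_le_one.trans hs) hy)
    (hϖ.trans interior_subset) hx hr

theorem IsPseudoConeSet.asymptoticCone_determinedHull (hK : IsPseudoConeSet K)
    (hϖ : ϖ ⊆ polarCone (asymptoticCone ℝ K)) :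
    asymptoticCone ℝ (determinedHull K ϖ) = asymptoticCone ℝ K := by
  rw [asymptoticCone_wulffShape isClosed_asymptoticCone hK.convex.asymptoticCone
    (by rwa [asymptoticCone_asymptoticCone]) (hK.nonempty.mono (hK.subset_determinedHull hϖ)),
    asymptoticCone_asymptoticCone]

theorem inner_le_supportFun_of_mem_wulffShape (hx : x ∈ wulffShape C ϖ (supportFun K))
    (hw : NormedSpace.normalize w ∈ ϖ) : ⟪x, w⟫ ≤ supportFun K w := by
  rw [← NormedSpace.norm_smul_normalize w, supportFun_smul (norm_nonneg w), real_inner_smul_right]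
  exact mul_le_mul_of_nonneg_left ((mem_wulffShape.1 hx).2 _ hw) (norm_nonneg w)

theorem mem_of_mem_wulffShape_of_mem_outerUnitNormals [CompleteSpace E] (hne : K.Nonempty)
    (hcl : IsClosed K) (hconv : Convex ℝ K) (hx : x ∈ wulffShape C ϖ (supportFun K))
    (hu : u ∈ outerUnitNormals K x) (hϖ : ϖ ∈ 𝓝[Metric.sphere 0 1] u) : x ∈ K := by
  by_contra hxK
  obtain ⟨f, b, hfK, hfx⟩ := geometric_hahn_banach_closed_point hconv hcl hxK
  obtain ⟨v, rfl⟩ := (InnerProductSpace.toDual ℝ E).surjective f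
  simp only [InnerProductSpace.toDual_apply_apply, real_inner_comm _ v] at hfK hfx
  obtain ⟨t, ht, htϖ⟩ := exists_pos_normalize_add_smul_mem hu.1 hϖ v
  have hle : ⟪x, u + t • v⟫ ≤ ⟪x, u⟫ + t * b :=
    (inner_le_supportFun_of_mem_wulffShape hx htϖ).trans <| supportFun_le hne fun y hy => by
      rw [inner_add_right, real_inner_smul_right]
      exact add_le_add (hu.2 y hy) (mul_le_mul_of_nonneg_left (hfK y hy).le ht.le)
  rw [inner_add_right, real_inner_smul_right, add_le_add_iff_left] at hle
  exact (le_of_mul_le_mul_left hle ht).not_gt hfx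

theorem outerUnitNormals_inter_subset_wulffShape (hne : K.Nonempty) :
    outerUnitNormals K x ∩ ϖ ⊆ outerUnitNormals (wulffShape C ϖ (supportFun K)) x :=
  fun u ⟨hu, huϖ⟩ => ⟨hu.1, fun _ hy =>
    ((mem_wulffShape.1 hy).2 u huϖ).trans (supportFun_le hne hu.2)⟩

theorem IsPseudoConeSet.gaussPreimage_determinedHull [CompleteSpace E] (hK : IsPseudoConeSet K)
    (hϖ : ϖ ⊆ interior (polarCone (asymptoticCone ℝ K)))
    (hω : ∀ u ∈ ω, ϖ ∈ 𝓝[Metric.sphere 0 1] u) :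
    gaussPreimage (determinedHull K ϖ) ω = gaussPreimage K ω := by
  set L := determinedHull K ϖ
  have hKL : K ⊆ L := hK.subset_determinedHull (hϖ.trans interior_subset)
  ext x
  rw [mem_gaussPreimage_iff_of_isClosed (isClosed_wulffShape isClosed_asymptoticCone),
    mem_gaussPreimage_iff_of_isClosed hK.isClosed]
  have hLK : outerUnitNormals L x ⊆ outerUnitNormals K x := outerUnitNormals_anti hKL x
  have hKϖ : outerUnitNormals K x ∩ ϖ ⊆ outerUnitNormals L x :=
    outerUnitNormals_inter_subset_wulffShape hK.nonempty
  have hmem : ∀ u ∈ ω, u ∈ outerUnitNormals K x → u ∈ ϖ := fun u hu huK =>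
    mem_of_mem_nhdsWithin (mem_sphere_zero_iff_norm.2 huK.1) (hω u hu)
  constructor
  · rintro ⟨hxL, u, huω, hNL⟩
    have huK : u ∈ outerUnitNormals K x := hLK (hNL ▸ mem_singleton u)
    have hxK : x ∈ K := mem_of_mem_wulffShape_of_mem_outerUnitNormals hK.nonempty hK.isClosed
      hK.convex hxL huK (hω u huω)
    have hxu : ⟪x, u⟫ < 0 := inner_neg_of_mem_interior_polarCone
      (hϖ (hmem u huω huK)) (hK.subset_asymptoticCone hxK) (ne_of_mem_of_not_mem hxK hK.zero_notMem)
    exact ⟨hxK, u, huω, outerUnitNormals_eq_singleton_of_isolated huK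
      (neg_notMem_outerUnitNormals hK.smul_mem hxK hxu) (hω u huω) (hNL ▸ hKϖ)⟩
  · rintro ⟨hxK, u, huω, hNK⟩
    have huK : u ∈ outerUnitNormals K x := hNK ▸ mem_singleton u
    have huL : u ∈ outerUnitNormals L x := hKϖ ⟨huK, hmem u huω huK⟩
    exact ⟨hKL hxK, u, huω, Subset.antisymm (hNK ▸ hLK) (singleton_subset_iff.2 huL)⟩

theorem statement17_general [CompleteSpace E] (hK : IsPseudoConeSet K) (hϖne : ϖ.Nonempty)
    (hϖ : ϖ ⊆ interior (polarCone (asymptoticCone ℝ K))) :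
    (IsPseudoConeSet (determinedHull K ϖ) ∧
      asymptoticCone ℝ (determinedHull K ϖ) = asymptoticCone ℝ K) ∧
    determinedHull K ϖ = wulffShape (asymptoticCone ℝ K) ϖ (supportFun (determinedHull K ϖ)) ∧
    ∀ ω : Set E, (∀ u ∈ ω, ϖ ∈ 𝓝[Metric.sphere 0 1] u) →
      gaussPreimage (determinedHull K ϖ) ω = gaussPreimage K ω :=
  have hpolar := hϖ.trans interior_subset
  ⟨⟨hK.isPseudoConeSet_determinedHull hϖne hϖ, hK.asymptoticCone_determinedHull hpolar⟩,
    (wulffShape_supportFun_wulffShape hK.nonempty hK.subset_asymptoticCone hpolar).symm,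
    fun _ hω => hK.gaussPreimage_determinedHull hϖ hω⟩

end InnerProductSpace

theorem isPseudoCone_iff_isPseudoConeSet {n : ℕ} {K : Set (En n)} :
    IsPseudoCone n K ↔ IsPseudoConeSet K := by
  refine ⟨fun ⟨hne, hcl, hconv, h0, hsmul⟩ => ⟨hne, hcl, hconv, h0, fun x hx r hr => ?_⟩,
    fun h => ⟨h.nonempty, h.isClosed, h.convex, h.zero_notMem, fun r hr => ?_⟩⟩
  · exact hsmul r hr (smul_mem_smul_set hx)
  · exact image_subset_iff.2 fun x hx => h.smul_mem hx hr

theorem isCPseudoCone_iff_asymptoticCone_eq {n : ℕ} {C K : Set (En n)} :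
    IsCPseudoCone n C K ↔ IsPseudoConeSet K ∧ asymptoticCone ℝ K = C := by
  rw [IsCPseudoCone, isPseudoCone_iff_isPseudoConeSet]
  refine and_congr_right fun hK => ?_
  have hrec : recCone n K = asymptoticCone ℝ K := Set.ext fun z =>
    (mem_asymptoticCone_iff_forall_add_smul_mem hK.nonempty hK.isClosed hK.convex).symm
  rw [hrec]

theorem mem_nhdsWithin_sphere_of_ball_inter_omegaDual_subset {n : ℕ} {C ϖ : Set (En n)} {u : En n}
    (hu : u ∈ omegaDual n C) (h : ∃ ε > (0 : ℝ), Metric.ball u ε ∩ omegaDual n C ⊆ ϖ) :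
    ϖ ∈ 𝓝[Metric.sphere 0 1] u := by
  have hnhds : ϖ ∈ 𝓝[omegaDual n C] u := Metric.mem_nhdsWithin_iff.2 h
  rwa [omegaDual, nhdsWithin_inter_of_mem'
    (mem_nhdsWithin_of_mem_nhds (isOpen_interior.mem_nhds hu.2))] at hnhds

/-- For `K ∈ ps(C)` and nonempty compact `ϖ ⊆ Ω_{C°}`, the set
`K^{(ϖ)} = C ∩ ⋂_{u∈ϖ} H^-(u,h_K(u))` belongs to `K(C,ϖ)`, and for every compact set `ω`
contained in the interior of `ϖ` relative to `Ω_{C°}`, `ν_{K^{(ϖ)}}^{-1}(ω) = ν_K^{-1}(ω)`. -/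
theorem statement17 (n : ℕ) (hn : 2 ≤ n) (C : Set (En n)) (hC : IsGoodCone n C)
    (K : Set (En n)) (hK : IsCPseudoCone n C K)
    (ϖ : Set (En n)) (hϖne : ϖ.Nonempty) (hϖc : IsCompact ϖ) (hϖsub : ϖ ⊆ omegaDual n C) :
    CDetermined n C ϖ (C ∩ ⋂ u ∈ ϖ, {x | ⟪x, u⟫ ≤ suppFn n K u}) ∧
    ∀ ω : Set (En n), IsCompact ω →
      (∀ u ∈ ω, u ∈ ϖ ∧ ∃ ε > (0 : ℝ), Metric.ball u ε ∩ omegaDual n C ⊆ ϖ) →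
      nuInv n (C ∩ ⋂ u ∈ ϖ, {x | ⟪x, u⟫ ≤ suppFn n K u}) ω = nuInv n K ω := by
  obtain ⟨hKset, rfl⟩ := isCPseudoCone_iff_asymptoticCone_eq.1 hK
  obtain ⟨hL, hdet, hν⟩ := statement17_general hKset hϖne (hϖsub.trans inter_subset_right)
  exact ⟨⟨isCPseudoCone_iff_asymptoticCone_eq.2 hL, hdet⟩, fun ω _ hω => hν ω fun u hu =>
    mem_nhdsWithin_sphere_of_ball_inter_omegaDual_subset (hϖsub (hω u hu).1) (hω u hu).2⟩
end
end

section
/- Let K ∈ ps(C) and let s = min{t ∈ ℝ : K ∩ H(𝔳,t) ≠ ∅}. For every nonempty compact set ω ⊂ Ω_{C°}, with t_ω the number provided by the hyperplane lemma for s (satisfying t_ω ≤ c₁ s/Δ(ω) with c₁ depending only on C and 𝔳), the set M(K,ω) = ⋃_{x ∈ ν_K^{-1}(ω)} [o,x] satisfies M(K,ω) ⊂ C^-(t_ω); in particular ν_K^{-1}(ω) ⊂ C^-(t_ω). -/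
open MeasureTheory Set Filter
open scoped RealInnerProductSpace ENNReal Topology Pointwise NNReal

noncomputable section

/-!
Let `x ∈ K` have outer normal `u ∈ ω ⊆ C°`, and let `y ∈ K` have height `⟪y, v⟫ ≤ s`. Then
`⟪y, u⟫ ≤ ⟪x, u⟫ ≤ 0`, so the supporting hyperplane at `x` meets the segment `[o, y]`. Heights only
decrease from `y` towards `o`, so it meets `C⁻(s)`, and the hyperplane lemma puts `x` into
`C⁻(t_ω)`; that set is star-shaped at `o` and thus contains `[o, x]`.
-/

theorem mem_asymptoticCone_of_frequently_smul_mem {k V : Type*} [Field k] [LinearOrder k]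
    [IsStrictOrderedRing k] [TopologicalSpace k] [OrderTopology k] [AddCommGroup V] [Module k V]
    [TopologicalSpace V] [IsTopologicalAddGroup V] [ContinuousSMul k V] {A : Set V} {x : V}
    (h : ∃ᶠ c : k in atTop, c • x ∈ A) : x ∈ asymptoticCone k A :=
  (tendsto_id.atTop_smul_const_tendsto_asymptoticNhds x).frequently h

section Functional

variable {k E : Type*} [Field k] [LinearOrder k] [IsStrictOrderedRing k] [AddCommGroup E]
  [Module k E]

theorem exists_mem_segment_apply_eq (f : E →ᵃ[k] k) {x y : E} {τ : k} (hx : f x ≤ τ)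
    (hy : τ ≤ f y) : ∃ z ∈ segment k x y, f z = τ := by
  suffices τ ∈ f '' segment k x y from this
  rw [image_segment, segment_eq_Icc (hx.trans hy)]
  exact ⟨hx, hy⟩

theorem starConvex_zero_inter_sublevel {C : Set E} (hC : StarConvex k 0 C) {f : E →ₗ[k] k}
    (hf : ∀ x ∈ C, 0 ≤ f x) (t : k) : StarConvex k 0 (C ∩ {x | f x ≤ t}) := by
  rw [starConvex_zero_iff] at hC ⊢
  rintro x ⟨hxC, hxt⟩ a ha₀ ha₁
  refine ⟨hC hxC ha₀ ha₁, ?_⟩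
  calc f (a • x) = a * f x := by rw [map_smul, smul_eq_mul]
    _ ≤ f x := mul_le_of_le_one_left (hf x hxC) ha₁
    _ ≤ t := hxt

end Functional

section ConeInEuclideanSpace

variable {n : ℕ} {C K ω : Set (En n)} {u v x : En n} {s t : ℝ}

theorem IsGoodCone.starConvex_zero (hC : IsGoodCone n C) : StarConvex ℝ 0 C :=
  starConvex_zero_iff.2 fun x hx r hr _ => hC.2.2.1 x hx r hr

theorem IsPseudoCone.subset_recCone (hK : IsPseudoCone n K) : K ⊆ recCone n K := by
  obtain ⟨-, hclosed, hconv, -, hdil⟩ := hK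
  intro z hz x hx t ht
  have hz_asymp : z ∈ asymptoticCone ℝ K := by
    refine mem_asymptoticCone_of_frequently_smul_mem (Eventually.frequently ?_)
    filter_upwards [eventually_ge_atTop 1] with l hl using hdil l hl (smul_mem_smul_set hz)
  rw [add_comm]
  exact hconv.smul_vadd_mem_of_isClosed_of_mem_asymptoticCone hclosed ht hz_asymp hx

theorem IsCPseudoCone.subset_cone (hK : IsCPseudoCone n C K) : K ⊆ C :=
  hK.1.subset_recCone.trans hK.2.subset

theorem inner_nonneg_of_neg_mem_dualCone (hv : -v ∈ dualCone n C) (hx : x ∈ C) : 0 ≤ ⟪x, v⟫ := by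
  rw [real_inner_comm]
  simpa only [inner_neg_left, neg_nonpos] using hv x hx

theorem starConvex_zero_Cminus (hC : StarConvex ℝ 0 C) (hv : -v ∈ dualCone n C) (t : ℝ) :
    StarConvex ℝ 0 (Cminus n C v t) := by
  have hf : ∀ x ∈ C, 0 ≤ (innerₗ (En n)).flip v x := fun x hx =>
    inner_nonneg_of_neg_mem_dualCone hv hx
  exact starConvex_zero_inter_sublevel hC hf t

theorem hyperplane_inter_Cminus_nonempty_of_mem_normalsAt (hC : StarConvex ℝ 0 C) (hKC : K ⊆ C)
    (hv : -v ∈ dualCone n C) (hs : (K ∩ {y | ⟪y, v⟫ ≤ s}).Nonempty) (hx : x ∈ K)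
    (hu : u ∈ dualCone n C) (hux : u ∈ normalsAt n K x) :
    ({y | ⟪y, u⟫ = ⟪x, u⟫} ∩ Cminus n C v s).Nonempty := by
  obtain ⟨y, hyK, hys⟩ := hs
  have hx_nonpos : ⟪x, u⟫ ≤ 0 := by
    rw [real_inner_comm]
    exact hu x (hKC hx)
  have h_zero : ⟪x, u⟫ ≤ (innerₗ (En n)).flip u 0 := by rwa [map_zero]
  obtain ⟨z, hz, hzu⟩ :=
    exists_mem_segment_apply_eq ((innerₗ (En n)).flip u).toAffineMap (hux.2 y hyK) h_zero
  have hyC : y ∈ Cminus n C v s := ⟨hKC hyK, hys⟩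
  exact ⟨z, hzu, (starConvex_zero_Cminus hC hv s).segment_subset hyC (segment_symm ℝ y 0 ▸ hz)⟩

theorem statement19_general (hC : StarConvex ℝ 0 C) (hK : IsClosed K) (hKC : K ⊆ C)
    (hv : -v ∈ dualCone n C) (hs : (K ∩ {y | ⟪y, v⟫ ≤ s}).Nonempty) (hω : ω ⊆ dualCone n C)
    (ht : ∀ u ∈ ω, ∀ τ : ℝ, ({y : En n | ⟪y, u⟫ = τ} ∩ Cminus n C v s).Nonempty →
      {y : En n | ⟪y, u⟫ = τ} ∩ C ⊆ Cminus n C v t) :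
    (⋃ x ∈ nuInv n K ω, segment ℝ (0 : En n) x) ⊆ Cminus n C v t ∧
      nuInv n K ω ⊆ Cminus n C v t := by
  have hsub : nuInv n K ω ⊆ Cminus n C v t := by
    rintro x ⟨hx_frontier, u, huω, hnormals⟩
    have hx : x ∈ K := hK.frontier_subset hx_frontier
    have hux : u ∈ normalsAt n K x := hnormals ▸ mem_singleton u
    have hmeets := hyperplane_inter_Cminus_nonempty_of_mem_normalsAt hC hKC hv hs hx (hω huω) hux
    exact ht u huω ⟪x, u⟫ hmeets ⟨rfl, hKC hx⟩
  exact ⟨iUnion₂_subset fun x hx => (starConvex_zero_Cminus hC hv t).segment_subset (hsub hx),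
    hsub⟩

end ConeInEuclideanSpace

/-- Let `K ∈ ps(C)` and let `s` be the minimum of `{t : K ∩ H(𝔳,t) ≠ ∅}`.
For every nonempty compact `ω ⊆ Ω_{C°}` and every `t_ω` with the property of the hyperplane
lemma for `s`, the set `M(K,ω) = ⋃_{x ∈ ν_K^{-1}(ω)} [0,x]` satisfies `M(K,ω) ⊆ C^-(t_ω)`;
in particular `ν_K^{-1}(ω) ⊆ C^-(t_ω)`. -/
theorem statement19 (n : ℕ) (hn : 2 ≤ n) (C : Set (En n)) (hC : IsGoodCone n C)
    (v : En n) (hv1 : ‖v‖ = 1) (hv2 : v ∈ interior C) (hv3 : -v ∈ interior (dualCone n C))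
    (K : Set (En n)) (hK : IsCPseudoCone n C K)
    (s : ℝ) (hs1 : (K ∩ {x | ⟪x, v⟫ = s}).Nonempty)
    (hs2 : ∀ t : ℝ, (K ∩ {x | ⟪x, v⟫ = t}).Nonempty → s ≤ t)
    (ω : Set (En n)) (hωne : ω.Nonempty) (hωc : IsCompact ω) (hωsub : ω ⊆ omegaDual n C)
    (tω : ℝ)
    (htω : ∀ u ∈ ω, ∀ τ : ℝ, ({x : En n | ⟪x, u⟫ = τ} ∩ Cminus n C v s).Nonempty →
      {x : En n | ⟪x, u⟫ = τ} ∩ C ⊆ Cminus n C v tω) :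
    (⋃ x ∈ nuInv n K ω, segment ℝ (0 : En n) x) ⊆ Cminus n C v tω ∧
      nuInv n K ω ⊆ Cminus n C v tω := by
  exact statement19_general hC.starConvex_zero hK.1.2.1 hK.subset_cone (interior_subset hv3)
    (hs1.mono fun _ hx => ⟨hx.1, hx.2.le⟩) (fun _ hu => interior_subset (hωsub hu).2) htω
end
end
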